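/- For every integer k with 0 ≤ k ≤ n, the family {π_{k,r} : 0 ≤ r ≤ ⌊k/2⌋} is a basis of the subspace of M spanned by {e_{k,p} : 0 ≤ p ≤ ⌊k/2⌋}. -/

import Mathlib

/-- Valid basis indices: pairs `(k,p)` of integers with `0 ≤ p` and `2p ≤ k`. -/
def Idx : Type := { x : ℤ × ℤ // 0 ≤ x.2 ∧ 2 * x.2 ≤ x.1 }

/-- The free real vector space on the basis `{e_{k,p} : 0 ≤ 2p ≤ k}`. -/
abbrev M : Type := Idx →₀ ℝ

/-- The basis vector `e_{k,p}`, with the convention that it is `0` for invalid indices. -/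
noncomputable def e (k p : ℤ) : M :=
  if h : 0 ≤ p ∧ 2 * p ≤ k then Finsupp.single ⟨(k, p), h⟩ 1 else 0

/-- `L e_{k,p} = (k - 2p + 1) e_{k+1,p}`. -/
noncomputable def opL : M →ₗ[ℝ] M :=
  Finsupp.lsum ℝ fun v => LinearMap.toSpanSingleton ℝ M
    (((v.1.1 - 2 * v.1.2 + 1 : ℤ) : ℝ) • e (v.1.1 + 1) v.1.2)

/-- `Λ e_{k,p} = (2n - 2p - k + 1) e_{k-1,p} + (k - 2p + 1) e_{k-1,p-1}`. -/
noncomputable def opLam (n : ℕ) : M →ₗ[ℝ] M :=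
  Finsupp.lsum ℝ fun v => LinearMap.toSpanSingleton ℝ M
    ((((2 * (n : ℤ) - 2 * v.1.2 - v.1.1 + 1 : ℤ) : ℝ)) • e (v.1.1 - 1) v.1.2 +
      (((v.1.1 - 2 * v.1.2 + 1 : ℤ) : ℝ)) • e (v.1.1 - 1) (v.1.2 - 1))

/-- `H e_{k,p} = (2k - 2n) e_{k,p}`. -/
noncomputable def opH (n : ℕ) : M →ₗ[ℝ] M :=
  Finsupp.lsum ℝ fun v => LinearMap.toSpanSingleton ℝ M
    (((2 * v.1.1 - 2 * (n : ℤ) : ℤ) : ℝ) • e v.1.1 v.1.2)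

/-- The primitive element
`π_{2r,r} = (-1)^r (2n-4r+1)!! ∑_{i=0}^r (-1)^i ((2r-2i-1)!!/(2n-2r-2i+1)!!) e_{2r,i}`.
(Note `(2r-2i-1)` is truncated natural subtraction, so for `i = r` the numerator is
`0‼ = 1`, matching the convention `(-1)!! = 1`.) -/
noncomputable def piBase (n r : ℕ) : M :=
  ((-1 : ℝ) ^ r * (Nat.doubleFactorial (2 * n - 4 * r + 1) : ℝ)) •
    ∑ i ∈ Finset.range (r + 1),
      ((-1 : ℝ) ^ i * (Nat.doubleFactorial (2 * r - 2 * i - 1) : ℝ) /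
          (Nat.doubleFactorial (2 * n - 2 * r - 2 * i + 1) : ℝ)) •
        e (2 * r : ℤ) (i : ℤ)

/-- `π_{k,r} := L^(k-2r) π_{2r,r}`. -/
noncomputable def piElt (n k r : ℕ) : M := (opL ^ (k - 2 * r)) (piBase n r)


theorem opL_e (k p : ℤ) (h : 0 ≤ p ∧ 2 * p ≤ k) :
    opL (e k p) = ((k - 2 * p + 1 : ℤ) : ℝ) • e (k + 1) p := by
  have : e k p = Finsupp.single ⟨(k, p), h⟩ 1 := by simp [e, h]
  rw [this]
  refine (Finsupp.lsum_single ℝ _ _ _).trans ?_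
  exact (LinearMap.toSpanSingleton_apply ℝ M _ _).trans (one_smul ℝ _)

theorem opL_pow_e (m : ℕ) (k p : ℤ) (h : 0 ≤ p ∧ 2 * p ≤ k) :
    ∃ c : ℝ, c ≠ 0 ∧ (opL ^ m) (e k p) = c • e (k + m) p := by
  induction m with
  | zero => exact ⟨1, one_ne_zero, by simp⟩
  | succ m ih =>
    obtain ⟨c, hc, hm⟩ := ih
    refine ⟨c * ((k + m - 2 * p + 1 : ℤ) : ℝ), mul_ne_zero hc ?_, ?_⟩
    · rw [Int.cast_ne_zero]; omega
    · rw [pow_succ', Module.End.mul_apply, hm, map_smul, opL_e _ _ (by omega), smul_smul]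
      push_cast
      rw [add_assoc]

theorem piElt_expand (n k r : ℕ) (hr : 2 * r ≤ k) :
    ∃ c : ℕ → ℝ, c r ≠ 0 ∧ piElt n k r =
      ∑ i ∈ Finset.range (r + 1), c i • e (k : ℤ) (i : ℤ) := by
  have H : ∀ i : ℕ, ∃ c : ℝ, c ≠ 0 ∧ (i < r + 1 →
      (opL ^ (k - 2 * r)) (e (2 * r : ℤ) (i : ℤ)) = c • e (k : ℤ) (i : ℤ)) := by
    intro i
    by_cases hi : i < r + 1
    · obtain ⟨c, hc, h⟩ := opL_pow_e (k - 2 * r) (2 * r : ℤ) (i : ℤ) (by omega)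
      refine ⟨c, hc, fun _ => ?_⟩
      rw [h]
      congr 2
      omega
    · exact ⟨1, one_ne_zero, fun h => absurd h hi⟩
  choose d hd hL using H
  have hdf : ∀ m : ℕ, (Nat.doubleFactorial m : ℝ) ≠ 0 := fun m =>
    Nat.cast_ne_zero.mpr (Nat.doubleFactorial_pos m).ne'
  refine ⟨fun i => ((-1 : ℝ) ^ r * (Nat.doubleFactorial (2 * n - 4 * r + 1) : ℝ)) *
      (((-1 : ℝ) ^ i * (Nat.doubleFactorial (2 * r - 2 * i - 1) : ℝ) /
          (Nat.doubleFactorial (2 * n - 2 * r - 2 * i + 1) : ℝ)) * d i), ?_, ?_⟩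
  · have h1 : ((-1 : ℝ) ^ r) ≠ 0 := pow_ne_zero _ (by norm_num)
    exact mul_ne_zero (mul_ne_zero h1 (hdf _))
      (mul_ne_zero (div_ne_zero (mul_ne_zero h1 (hdf _)) (hdf _)) (hd r))
  · rw [piElt, piBase, map_smul, map_sum, Finset.smul_sum]
    refine Finset.sum_congr rfl fun i hi => ?_
    rw [map_smul, hL i (Finset.mem_range.mp hi), smul_smul, smul_smul, mul_assoc]

theorem e_linearIndependent (k : ℕ) :
    LinearIndependent ℝ (fun p : Fin (k / 2 + 1) => e (k : ℤ) ((p : ℕ) : ℤ)) := by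
  have hv : ∀ p : Fin (k / 2 + 1), 0 ≤ ((p : ℕ) : ℤ) ∧ 2 * ((p : ℕ) : ℤ) ≤ (k : ℤ) := by
    intro p; have := p.2; omega
  let g : Fin (k / 2 + 1) → Idx := fun p => ⟨((k : ℤ), ((p : ℕ) : ℤ)), hv p⟩
  have hg : Function.Injective g := by
    intro a b hab
    have := congrArg (fun x : Idx => x.1.2) hab
    simp only [g] at this
    exact Fin.ext (by exact_mod_cast this)
  have h := (Finsupp.linearIndependent_single_one ℝ Idx).comp g hg
  convert h using 1
  funext p
  simp only [e, dif_pos (hv p), Function.comp, g]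

theorem span_pi_eq (n k : ℕ) :
    Submodule.span ℝ (Set.range fun r : Fin (k / 2 + 1) => piElt n k (r : ℕ)) =
      Submodule.span ℝ (Set.range fun p : Fin (k / 2 + 1) => e (k : ℤ) ((p : ℕ) : ℤ)) := by
  apply le_antisymm
  · rw [Submodule.span_le]
    rintro _ ⟨r, rfl⟩
    have hr := r.2
    obtain ⟨c, -, h⟩ := piElt_expand n k r (by omega)
    simp only [h, SetLike.mem_coe]
    refine Submodule.sum_mem _ fun i hi => Submodule.smul_mem _ _ (Submodule.subset_span ?_)
    have := Finset.mem_range.mp hi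
    exact ⟨⟨i, by omega⟩, rfl⟩
  · have key : ∀ r : ℕ, r < k / 2 + 1 → e (k : ℤ) (r : ℤ) ∈
        Submodule.span ℝ (Set.range fun r : Fin (k / 2 + 1) => piElt n k (r : ℕ)) := by
      intro r
      induction r using Nat.strong_induction_on with
      | _ r ih =>
        intro hr
        obtain ⟨c, hc, h⟩ := piElt_expand n k r (by omega)
        rw [Finset.sum_range_succ] at h
        rw [← Submodule.smul_mem_iff _ hc, ← sub_eq_iff_eq_add'.mpr h]
        refine Submodule.sub_mem _ (Submodule.subset_span ⟨⟨r, hr⟩, rfl⟩) ?_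
        refine Submodule.sum_mem _ fun i hi => Submodule.smul_mem _ _ ?_
        have := Finset.mem_range.mp hi
        exact ih i this (by omega)
    rw [Submodule.span_le]
    rintro _ ⟨r, rfl⟩
    exact key r r.2

theorem stmt15 (n k : ℕ) (hk : k ≤ n) :
    LinearIndependent ℝ (fun r : Fin (k / 2 + 1) => piElt n k (r : ℕ)) ∧
    Submodule.span ℝ (Set.range fun r : Fin (k / 2 + 1) => piElt n k (r : ℕ)) =
      Submodule.span ℝ (Set.range fun p : Fin (k / 2 + 1) => e (k : ℤ) ((p : ℕ) : ℤ)) := by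
  refine ⟨?_, span_pi_eq n k⟩
  have h := linearIndependent_iff_card_eq_finrank_span.mp (e_linearIndependent k)
  rw [linearIndependent_iff_card_eq_finrank_span, h, Set.finrank, Set.finrank, span_pi_eq]
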